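/- arXiv:2405.03046 — 2 statements merged into one kernel-verified Lean document; each statement's English description precedes it below -/
import Mathlib

section
/- Endow ℝⁿ with the partial order induced by a closed cone C ⊆ ℝⁿ (that is, x ≤ y iff y − x ∈ C). Let T : ℝⁿ → ℝⁿ be a linear map with T C ⊆ C whose spectrum is {1} and all of whose Jordan blocks have size at most 2, i.e., (T − id)² = 0. Then T v ≥ v for every v ∈ ℝⁿ with v ≥ 0 (equivalently, T − id maps C into C). -/
/-!
Since `(T - 1) ^ 2 = 0`, the binomial expansion of `(1 + (T - 1)) ^ k` stops after its linear term,
so the iterates `T ^ k v` grow linearly in `k` with slope `T v - v`. Hence `T v - v` is the limit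
of the vectors `k⁻¹ • T ^ k v`, which lie in the cone along with `v`.
-/

open Filter Topology

theorem pow_eq_one_add_nsmul_of_sub_one_sq_eq_zero {R : Type*} [Ring R] {x : R}
    (hx : (x - 1) ^ 2 = 0) (k : ℕ) : x ^ k = 1 + k • (x - 1) := by
  have hfix : (x - 1) * x = x - 1 := by
    rwa [sq, mul_sub_one, sub_eq_zero] at hx
  induction k with
  | zero => simp
  | succ k ih =>
    calc x ^ (k + 1) = (1 + k • (x - 1)) * x := by rw [pow_succ, ih]
      _ = x + k • (x - 1) := by rw [add_mul, one_mul, smul_mul_assoc, hfix]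
      _ = 1 + (k + 1) • (x - 1) := by rw [succ_nsmul]; abel

section

variable {𝕜 E : Type*} [TopologicalSpace 𝕜] [AddCommGroup E] [TopologicalSpace E] [ContinuousAdd E]

theorem tendsto_inv_natCast_smul_pow_apply_of_sub_one_sq_eq_zero [DivisionRing 𝕜] [CharZero 𝕜]
    [ContinuousSMul ℚ≥0 𝕜] [Module 𝕜 E] [ContinuousSMul 𝕜 E] {T : Module.End 𝕜 E}
    (hT : (T - 1) ^ 2 = 0) (v : E) :
    Tendsto (fun k : ℕ => (k : 𝕜)⁻¹ • (T ^ k) v) atTop (𝓝 (T v - v)) := by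
  have hlim : Tendsto (fun k : ℕ => (k : 𝕜)⁻¹ • v + (T v - v)) atTop (𝓝 (T v - v)) := by
    simpa using ((tendsto_inv_atTop_nhds_zero_nat (𝕜 := 𝕜)).smul_const v).add_const (T v - v)
  refine hlim.congr' ?_
  filter_upwards [eventually_ne_atTop 0] with k hk
  have hpow : (T ^ k) v = v + (k : 𝕜) • (T v - v) := by
    simp [pow_eq_one_add_nsmul_of_sub_one_sq_eq_zero hT k, Nat.cast_smul_eq_nsmul]
  rw [hpow, smul_add, inv_smul_smul₀ (Nat.cast_ne_zero.mpr hk)]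

theorem jordan_blocks_size_two_dominates_id_general [Field 𝕜] [LinearOrder 𝕜]
    [IsStrictOrderedRing 𝕜] [ContinuousSMul ℚ≥0 𝕜] [Module 𝕜 E] [ContinuousSMul 𝕜 E]
    {C : Set E} (hC : IsClosed C) (hsmul : ∀ c : 𝕜, 0 < c → ∀ x ∈ C, c • x ∈ C)
    {T : Module.End 𝕜 E} (hTC : Set.MapsTo T C C) (hT : (T - 1) ^ 2 = 0) :
    ∀ v ∈ C, T v - v ∈ C := by
  intro v hv
  refine hC.mem_of_tendsto (tendsto_inv_natCast_smul_pow_apply_of_sub_one_sq_eq_zero hT v) ?_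
  filter_upwards [eventually_gt_atTop 0] with k hk
  have hpow : (T ^ k) v ∈ C := by
    rw [Module.End.pow_apply]
    exact hTC.iterate k hv
  exact hsmul _ (inv_pos.mpr (Nat.cast_pos.mpr hk)) _ hpow

end

/-- Endow `ℝⁿ` with the order induced by a closed cone `C`.
If `T` is linear with `T C ⊆ C` and `(T - id)^2 = 0` (i.e. the spectrum of `T` is `{1}`
and all Jordan blocks have size at most `2`), then `T v ≥ v` for every `v ∈ C`,
i.e. `T - id` maps `C` into `C`. -/
theorem jordan_blocks_size_two_dominates_id
    {n : ℕ} (C : Set (Fin n → ℝ)) (hCclosed : IsClosed C)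
    (hCcone : ∀ (a b : ℝ), 0 ≤ a → 0 ≤ b → ∀ x ∈ C, ∀ y ∈ C, a • x + b • y ∈ C)
    (hCpointed : ∀ x : Fin n → ℝ, x ∈ C → -x ∈ C → x = 0)
    (T : Module.End ℝ (Fin n → ℝ)) (hTC : ∀ x ∈ C, T x ∈ C)
    (hJordan : ((T - 1) ^ 2 : Module.End ℝ (Fin n → ℝ)) = 0) :
    ∀ v ∈ C, T v - v ∈ C :=
  jordan_blocks_size_two_dominates_id_general hCclosed
    (fun c hc x hx => by simpa using hCcone c 0 hc.le le_rfl x hx x hx) hTC hJordan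
end

section
/- Let H be a complex Hilbert space and let L be a bounded linear operator on H that is a 2-isometry, i.e., (L*)²L² − 2 L*L + id = 0 (equivalently, ‖L²x‖² − 2‖Lx‖² + ‖x‖² = 0 for all x ∈ H). Then ‖L x‖ ≥ ‖x‖ for every x ∈ H. -/
/-!
Pairing the hypothesis with `Lⁿ x` shows that the increments of `n ↦ ‖Lⁿ x‖²` never increase. If
the first increment were negative, the sequence would decrease at least linearly and eventually
become negative.
-/

section ConcaveSequence

variable {G : Type*} [AddCommGroup G]

theorem le_add_nsmul_sub_of_antitone_sub [PartialOrder G] [IsOrderedAddMonoid G] {a : ℕ → G}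
    (ha : Antitone fun n ↦ a (n + 1) - a n) (m k : ℕ) :
    a (m + k) ≤ a m + k • (a (m + 1) - a m) := by
  rw [← sub_le_iff_le_add']
  calc
    a (m + k) - a m = ∑ i ∈ Finset.range k, (a (m + i + 1) - a (m + i)) :=
      (Finset.sum_range_sub (fun i ↦ a (m + i)) k).symm
    _ ≤ (Finset.range k).card • (a (m + 1) - a m) :=
      Finset.sum_le_card_nsmul _ _ _ fun i _ ↦ ha (Nat.le_add_right m i)
    _ = k • (a (m + 1) - a m) := by rw [Finset.card_range]

variable [LinearOrder G] [IsOrderedAddMonoid G] [Archimedean G]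

theorem monotone_of_antitone_sub_of_bddBelow {a : ℕ → G}
    (ha : Antitone fun n ↦ a (n + 1) - a n) (hbdd : BddBelow (Set.range a)) : Monotone a := by
  obtain ⟨b, hb⟩ := hbdd
  refine monotone_nat_of_le_succ fun m ↦ ?_
  by_contra! hlt
  obtain ⟨k, hk⟩ := exists_lt_nsmul (sub_pos.2 hlt) (a m - b)
  have below_bound : a (m + k) < b :=
    calc
      a (m + k) ≤ a m + k • (a (m + 1) - a m) := le_add_nsmul_sub_of_antitone_sub ha m k
      _ = a m - k • (a m - a (m + 1)) := by rw [← neg_sub (a m), neg_nsmul, ← sub_eq_add_neg]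
      _ < b := sub_lt_comm.1 hk
  exact below_bound.not_ge (hb ⟨m + k, rfl⟩)

theorem apply_le_apply_map_of_sub_le_sub {α : Type*} {f : α → α} {φ : α → G}
    (hφ : BddBelow (Set.range φ)) (hf : ∀ x, φ (f (f x)) - φ (f x) ≤ φ (f x) - φ x) (x : α) :
    φ x ≤ φ (f x) := by
  have increments_antitone : Antitone fun n ↦ φ (f^[n + 1] x) - φ (f^[n] x) :=
    antitone_nat_of_succ_le fun n ↦ by
      simpa only [Function.iterate_succ_apply'] using hf (f^[n] x)
  have orbit_bddBelow : BddBelow (Set.range fun n ↦ φ (f^[n] x)) :=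
    hφ.mono (Set.range_comp_subset_range (fun n ↦ f^[n] x) φ)
  exact monotone_of_antitone_sub_of_bddBelow increments_antitone orbit_bddBelow zero_le_one

end ConcaveSequence

section Operator

open ContinuousLinearMap

variable {𝕜 H : Type*} [RCLike 𝕜] [NormedAddCommGroup H] [InnerProductSpace 𝕜 H]

theorem reApplyInnerSelf_nonpos {T : H →L[𝕜] H} (hT : T ≤ 0) (x : H) :
    T.reApplyInnerSelf x ≤ 0 := by
  have neg_pairing_nonneg := ((le_def T 0).1 hT).re_inner_nonneg_left x
  rwa [zero_sub, neg_apply, inner_neg_left, map_neg, neg_nonneg] at neg_pairing_nonneg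

variable [CompleteSpace H]

theorem reApplyInnerSelf_adjoint_sq_mul_sq_sub_add_one (L : H →L[𝕜] H) (x : H) :
    ((adjoint L) ^ 2 * L ^ 2 - 2 • (adjoint L * L) + 1).reApplyInnerSelf x =
      ‖L (L x)‖ ^ 2 - 2 * ‖L x‖ ^ 2 + ‖x‖ ^ 2 := by
  simp only [reApplyInnerSelf_apply, pow_two, two_smul, two_mul, mul_def, one_def, add_apply,
    sub_apply, comp_apply, id_apply, inner_add_left, inner_sub_left, adjoint_inner_left, map_add,
    map_sub, inner_self_eq_norm_mul_norm]

theorem two_isometry_expansive_general (L : H →L[𝕜] H)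
    (hL : (adjoint L) ^ 2 * L ^ 2 - 2 • (adjoint L * L) + 1 ≤ 0) (x : H) : ‖x‖ ≤ ‖L x‖ := by
  have norm_sq_bddBelow : BddBelow (Set.range fun y : H ↦ ‖y‖ ^ 2) :=
    ⟨0, Set.forall_mem_range.2 fun _ ↦ sq_nonneg _⟩
  have increments_le (y : H) : ‖L (L y)‖ ^ 2 - ‖L y‖ ^ 2 ≤ ‖L y‖ ^ 2 - ‖y‖ ^ 2 := by
    have second_difference_nonpos := reApplyInnerSelf_nonpos hL y
    rw [reApplyInnerSelf_adjoint_sq_mul_sq_sub_add_one] at second_difference_nonpos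
    linarith
  exact (sq_le_sq₀ (norm_nonneg _) (norm_nonneg _)).1
    (apply_le_apply_map_of_sub_le_sub norm_sq_bddBelow increments_le x)

end Operator

open ContinuousLinearMap in
/-- If `L` is a `2`-isometry on a complex Hilbert space `H`,
i.e. `(L*)² L² - 2 L* L + id = 0`, then `‖L x‖ ≥ ‖x‖` for all `x ∈ H`. -/
theorem two_isometry_expansive
    {H : Type*} [NormedAddCommGroup H] [InnerProductSpace ℂ H] [CompleteSpace H]
    (L : H →L[ℂ] H)
    (h2iso : (adjoint L) ^ 2 * L ^ 2 - 2 • (adjoint L * L) + 1 = 0) :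
    ∀ x : H, ‖x‖ ≤ ‖L x‖ :=
  two_isometry_expansive_general L h2iso.le
end
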